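/- Let n ≥ 2, let f : S^{n−1} → (0,∞) be smooth, and let φ : (0,∞) → (0,∞) be smooth and strictly increasing. If h₁ and h₂ are smooth positive functions on S^{n−1} with (∇²h₁ + h₁I) and (∇²h₂ + h₂I) positive definite, each satisfying φ(1/h) h (|∇h|² + h²)^{−n/2} det(∇²h + hI) = f on S^{n−1}, then h₁ = h₂. -/

import Mathlib

/-! The proof is a maximum principle. Let `c` be the maximum of `h₁ / h₂` on the sphere, attained
at `x`, and suppose `c > 1`. By homogeneity `c h₂ - h₁` is nonnegative on `ℝⁿ ∖ {0}` and vanishes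
at `x`, so at `x` the gradients satisfy `∇h₁ = c ∇h₂` and the Euclidean Hessians satisfy
`Hess h₁ ≤ c Hess h₂` (`IsLocalMin.fderiv_fderiv_nonneg`). The determinant is monotone on positive
definite operators (`linearMap_det_le_det`), hence `det(∇²h₁ + h₁ I) ≤ c^(n-1) det(∇²h₂ + h₂ I)`
(`IsSupportFn.det_scaledOp` accounts for the exponent). The factor
`h (|∇h|² + h²)^(-n/2) det(∇²h + hI)` is homogeneous of degree zero in `h`, so at `x` its value for
`h₁` is at most its value for `h₂`, while `φ(1/h₁) < φ(1/h₂)` because `h₁ = c h₂ > h₂` there. This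
contradicts the equality of the two right-hand sides, so `h₁ ≤ h₂` (`orlicz_le`), and the reverse
inequality follows by symmetry. -/


noncomputable section

open Metric MeasureTheory Set Filter Topology
open scoped RealInnerProductSpace NNReal

/-- Abbreviation for `n`-dimensional Euclidean space. -/
abbrev Euc (n : ℕ) : Type := EuclideanSpace ℝ (Fin n)

/-- The unit sphere `S^{n-1}` in `ℝⁿ`, as a set. -/
abbrev USphere (n : ℕ) : Set (Euc n) := Metric.sphere (0 : Euc n) 1

/-- The surface (spherical Lebesgue) measure on the unit sphere. -/
def sphMeasure (n : ℕ) : Measure (USphere n) :=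
  (volume : Measure (Euc n)).toSphere

/-- Total surface measure `|S^{n-1}|` of the unit sphere. -/
def sphArea (n : ℕ) : ℝ := (sphMeasure n Set.univ).toReal

/-- Integral over the unit sphere with respect to the spherical Lebesgue measure. -/
def sphInt (n : ℕ) (g : Euc n → ℝ) : ℝ :=
  ∫ x : USphere n, g x ∂(sphMeasure n)

/-- The covariant (spherical) gradient on `S^{n-1}` of the restriction of `F`,
i.e. the tangential component of the Euclidean gradient of `F`. -/
def sphGrad (n : ℕ) (F : Euc n → ℝ) (x : Euc n) : Euc n :=
  gradient F x - ⟪gradient F x, x⟫ • x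

/-- `√(|∇h|² + h²)` for the (1-homogeneous extension of the) function `F` at `x`. -/
def radTerm (n : ℕ) (F : Euc n → ℝ) (x : Euc n) : ℝ :=
  Real.sqrt (‖sphGrad n F x‖ ^ 2 + F x ^ 2)

/-- The Euclidean Hessian operator of `F` at `x`. For a positively 1-homogeneous `F`
this operator kills `x` and restricts on `x^⊥` to the matrix `∇²h + hI` of the
spherical Hessian. -/
def hessOp (n : ℕ) (F : Euc n → ℝ) (x : Euc n) : Euc n →L[ℝ] Euc n :=
  fderiv ℝ (gradient F) x

/-- `det(∇²h + hI)` at `x ∈ S^{n-1}`: the determinant of the restriction of the Euclidean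
Hessian of the 1-homogeneous extension to `x^⊥`, computed as the determinant of
`Hess F + x ⊗ x` on all of `ℝⁿ` (the Hessian of a 1-homogeneous function kills `x`). -/
def sphDet (n : ℕ) (F : Euc n → ℝ) (x : Euc n) : ℝ :=
  LinearMap.det
    ((hessOp n F x + (innerSL ℝ x).smulRight x : Euc n →L[ℝ] Euc n) : Euc n →ₗ[ℝ] Euc n)

/-- `F` is the (1-homogeneously extended) support function of a smooth strictly convex
body with the origin in its interior: it is smooth away from the origin, positively
1-homogeneous, positive, and `∇²h + hI` is positive definite on each tangent space. -/
structure IsSupportFn (n : ℕ) (F : Euc n → ℝ) : Prop where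
  smooth : ContDiffOn ℝ (⊤ : ℕ∞) F {(0 : Euc n)}ᶜ
  homog : ∀ c : ℝ, 0 < c → ∀ x : Euc n, F (c • x) = c * F x
  pos : ∀ x ∈ USphere n, 0 < F x
  posdef : ∀ x ∈ USphere n, ∀ v : Euc n, v ≠ 0 → ⟪x, v⟫ = 0 →
    0 < ⟪v, hessOp n F x v⟫

/-- The convex body determined by the support function `F`. -/
def bodyOf (n : ℕ) (F : Euc n → ℝ) : Set (Euc n) :=
  {y | ∀ x ∈ USphere n, ⟪x, y⟫ ≤ F x}

/-- The radial function of the convex body with support function `F`. -/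
def radialFn (n : ℕ) (F : Euc n → ℝ) (u : Euc n) : ℝ :=
  sSup {r : ℝ | 0 < r ∧ r • u ∈ bodyOf n F}

/-- The normalization factor `η` of the flow. -/
def flowEta (n : ℕ) (f : Euc n → ℝ) (φ : ℝ → ℝ) (h : Euc n → ℝ) : ℝ :=
  sphArea n / sphInt n (fun x => f x / φ (1 / h x))

/-- `H : ℝ → Euc n → ℝ` is (the family of support functions of) a smooth, origin-symmetric,
strictly convex solution of the flow on the time interval `J`. -/
structure IsFlowSol (n : ℕ) (f : Euc n → ℝ) (φ : ℝ → ℝ) (J : Set ℝ)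
    (H : ℝ → Euc n → ℝ) : Prop where
  smooth : ContDiffOn ℝ (⊤ : ℕ∞) (fun p : ℝ × Euc n => H p.1 p.2) (J ×ˢ {(0 : Euc n)}ᶜ)
  body : ∀ t ∈ J, IsSupportFn n (H t)
  symm : ∀ t ∈ J, ∀ x : Euc n, H t (-x) = H t x
  eqn : ∀ t ∈ J, ∀ x ∈ USphere n,
    HasDerivWithinAt (fun s => H s x)
      (H t x - flowEta n f φ (H t) * f x * radTerm n (H t) x ^ n /
        (φ (1 / H t x) * sphDet n (H t) x)) J t

/-- Condition (i) of the Orlicz-Aleksandrov flow theorem. -/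
def CondI (n : ℕ) (f : Euc n → ℝ) (φ : ℝ → ℝ) (h₀ : Euc n → ℝ) : Prop :=
  ∃ R : ℝ → ℝ, (∀ s ∈ Ioi (0 : ℝ), 0 < R s) ∧ StrictMonoOn R (Ioi 0) ∧
    Tendsto R (𝓝[>] (0 : ℝ)) (𝓝 0) ∧ Tendsto R atTop atTop ∧
    (∀ s ∈ Ioi (0 : ℝ), IntegrableOn (fun t => 1 / (t * φ t)) (Ioo 0 s) ∧
      R s = ∫ t in Ioo (0 : ℝ) s, 1 / (t * φ t)) ∧
    (∀ s ∈ Ioi (0 : ℝ), HasDerivAt R (1 / (s * φ s)) s ∧ 1 / (s * φ s) ≠ 0) ∧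
    ∃ Chat : ℝ, 0 < Chat ∧
      (∀ θ ∈ USphere n,
        sphInt n (fun x => f x * R (1 / |⟪x, θ⟫|)) ≤ Chat) ∧
      Chat < sphInt n (fun x => f x * R (1 / h₀ x))

/-- Condition (ii) of the Orlicz-Aleksandrov flow theorem. -/
def CondII (φ : ℝ → ℝ) : Prop :=
  ∃ R : ℝ → ℝ, (∀ s ∈ Ioi (0 : ℝ), 0 < R s) ∧ StrictAntiOn R (Ioi 0) ∧
    Tendsto R (𝓝[>] (0 : ℝ)) atTop ∧ Tendsto R atTop (𝓝 0) ∧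
    (∀ s ∈ Ioi (0 : ℝ), IntegrableOn (fun t => 1 / (t * φ t)) (Ioi s) ∧
      R s = ∫ t in Ioi s, 1 / (t * φ t)) ∧
    (∀ s ∈ Ioi (0 : ℝ), HasDerivAt R (-(1 / (s * φ s))) s ∧ 1 / (s * φ s) ≠ 0)

/-! ### Monotonicity of the determinant -/

theorem one_le_det_one_add_of_posSemidef {m : Type*} [Fintype m] [DecidableEq m]
    {P : Matrix m m ℝ} (hP : P.PosSemidef) : 1 ≤ (1 + P).det := by
  -- Evaluate the factored characteristic polynomial of `P` at `-1`.
  have key : (1 + P).det = ∏ i, (1 + hP.1.eigenvalues i) := by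
    have h := congrArg (Polynomial.eval (-1)) (hP.1.charpoly_eq)
    rw [Matrix.eval_charpoly, Polynomial.eval_prod] at h
    have h2 : Matrix.scalar m (-1 : ℝ) - P = -(1 + P) := by
      rw [map_neg, map_one]; abel
    rw [h2, Matrix.det_neg] at h
    have h3 : ∀ i, Polynomial.eval (-1) (Polynomial.X - Polynomial.C ((hP.1.eigenvalues i : ℝ)))
        = (-1) * (1 + hP.1.eigenvalues i) := fun i => by simp; ring
    simp only [RCLike.ofReal_real_eq_id, id_eq] at h
    simp only [h3] at h
    rw [Finset.prod_mul_distrib, Finset.prod_const, Finset.card_univ] at h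
    exact mul_left_cancel₀ (pow_ne_zero _ (by norm_num)) h
  rw [key]
  calc (1 : ℝ) = ∏ _i : m, (1 : ℝ) := by simp
    _ ≤ _ := Finset.prod_le_prod (fun _ _ => zero_le_one)
      (fun i _ => le_add_of_nonneg_right (hP.eigenvalues_nonneg i))

/-- Writing `A = Uᴴ U`, one has `A + P = Uᴴ (1 + Q) U` with `Q = (U⁻¹)ᴴ P U⁻¹` positive
semidefinite, which reduces the claim to `A = 1`. -/
theorem det_le_det_add_of_posDef {m : Type*} [Fintype m] [DecidableEq m]
    {A P : Matrix m m ℝ} (hA : A.PosDef) (hP : P.PosSemidef) : A.det ≤ (A + P).det := by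
  obtain ⟨U, rfl⟩ : ∃ U : Matrix m m ℝ, A = U.conjTranspose * U := by
    open scoped MatrixOrder in
    exact CStarAlgebra.nonneg_iff_eq_star_mul_self.mp hA.posSemidef.nonneg
  have hU : IsUnit U := by
    have := hA.isUnit
    rw [Matrix.isUnit_iff_isUnit_det] at this ⊢
    rw [Matrix.det_mul] at this
    exact isUnit_of_mul_isUnit_right this
  have hU' := (Matrix.isUnit_iff_isUnit_det _).1 hU
  have hdec : U.conjTranspose * U + P
      = U.conjTranspose * (1 + (U⁻¹).conjTranspose * P * U⁻¹) * U := by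
    have e1 : U⁻¹ * U = 1 := Matrix.nonsing_inv_mul _ hU'
    have e2 : U.conjTranspose * (U⁻¹).conjTranspose = 1 := by
      rw [← Matrix.conjTranspose_mul, e1, Matrix.conjTranspose_one]
    calc _ = U.conjTranspose * U + (U.conjTranspose * (U⁻¹).conjTranspose) * P * (U⁻¹ * U) := by
          rw [e1, e2, Matrix.one_mul, Matrix.mul_one]
      _ = _ := by simp only [Matrix.mul_add, Matrix.add_mul, Matrix.mul_one, Matrix.mul_assoc]
  have h1 := one_le_det_one_add_of_posSemidef (hP.conjTranspose_mul_mul_same U⁻¹)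
  have h2 := hA.det_pos
  rw [hdec, Matrix.det_mul, Matrix.det_mul]
  rw [Matrix.det_mul] at h2 ⊢
  nlinarith

/-- `det` is monotone for the Loewner order on positive definite self-adjoint operators. -/
theorem linearMap_det_le_det (n : ℕ) {A B : Euc n →ₗ[ℝ] Euc n}
    (hAs : A.IsSymmetric) (hBs : B.IsSymmetric)
    (hA : ∀ v, v ≠ 0 → 0 < ⟪v, A v⟫) (hAB : ∀ v, ⟪v, A v⟫ ≤ ⟪v, B v⟫) :
    LinearMap.det A ≤ LinearMap.det B := by
  have inner_eq : ∀ (T : Euc n →ₗ[ℝ] Euc n) (x : Fin n → ℝ),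
      dotProduct (star x) ((LinearMap.toMatrix (EuclideanSpace.basisFun (Fin n) ℝ).toBasis
        (EuclideanSpace.basisFun (Fin n) ℝ).toBasis T).mulVec x)
        = ⟪(WithLp.toLp 2 x : Euc n), T (WithLp.toLp 2 x)⟫ := by
    intro T x
    have h := LinearMap.toMatrix_mulVec_repr (EuclideanSpace.basisFun (Fin n) ℝ).toBasis
      (EuclideanSpace.basisFun (Fin n) ℝ).toBasis T (WithLp.toLp 2 x)
    have h' : ⇑((EuclideanSpace.basisFun (Fin n) ℝ).toBasis.repr (WithLp.toLp 2 x)) = x := by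
      ext i; simp
    rw [h'] at h
    rw [h]
    simp [PiLp.inner_apply, dotProduct, mul_comm]
  have herm : ∀ T : Euc n →ₗ[ℝ] Euc n, T.IsSymmetric →
      (LinearMap.toMatrix (EuclideanSpace.basisFun (Fin n) ℝ).toBasis
        (EuclideanSpace.basisFun (Fin n) ℝ).toBasis T).IsHermitian := fun T hT =>
    (LinearMap.isHermitian_toMatrix_iff _).2 hT
  set b := (EuclideanSpace.basisFun (Fin n) ℝ).toBasis with hb
  rw [← LinearMap.det_toMatrix b A, ← LinearMap.det_toMatrix b B]
  have e : LinearMap.toMatrix b b B = LinearMap.toMatrix b b A + LinearMap.toMatrix b b (B - A) := by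
    rw [← map_add]; congr 1; abel
  rw [e]
  apply det_le_det_add_of_posDef
  · refine .of_dotProduct_mulVec_pos (herm A hAs) fun {x} hx => ?_
    rw [inner_eq]
    exact hA _ (by simpa using hx)
  · refine .of_dotProduct_mulVec_nonneg (herm _ (hBs.sub hAs)) fun x => ?_
    rw [inner_eq, LinearMap.sub_apply, inner_sub_right]
    exact sub_nonneg.2 (hAB _)

/-! ### First and second derivatives of support functions -/

variable {n : ℕ} {F : Euc n → ℝ} {x : Euc n}

theorem IsSupportFn.contDiffAt (hF : IsSupportFn n F) (hx : x ≠ 0) :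
    ContDiffAt ℝ (⊤ : ℕ∞) F x :=
  hF.smooth.contDiffAt (isOpen_compl_singleton.mem_nhds hx)

theorem IsSupportFn.differentiableAt (hF : IsSupportFn n F) (hx : x ≠ 0) :
    DifferentiableAt ℝ F x :=
  (hF.contDiffAt hx).differentiableAt (by simp)

theorem IsSupportFn.differentiableAt_fderiv (hF : IsSupportFn n F) (hx : x ≠ 0) :
    DifferentiableAt ℝ (fderiv ℝ F) x :=
  ((hF.contDiffAt hx).fderiv_right (m := 1) (by norm_cast)).differentiableAt one_ne_zero

theorem IsSupportFn.inner_hessOp (hF : IsSupportFn n F) (hx : x ≠ 0) (v w : Euc n) :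
    ⟪hessOp n F x v, w⟫ = fderiv ℝ (fderiv ℝ F) x v w := by
  have h : gradient F = fun y => (InnerProductSpace.toDual ℝ (Euc n)).symm (fderiv ℝ F y) := rfl
  have h2 : hessOp n F x v
      = (InnerProductSpace.toDual ℝ (Euc n)).symm (fderiv ℝ (fderiv ℝ F) x v) := by
    rw [hessOp, h]
    have := ((InnerProductSpace.toDual ℝ (Euc n)).symm.toContinuousLinearEquiv.hasFDerivAt
      (x := fderiv ℝ F x)).comp x (hF.differentiableAt_fderiv hx).hasFDerivAt
    exact DFunLike.congr_fun this.fderiv v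
  rw [h2, InnerProductSpace.toDual_symm_apply]

theorem IsSupportFn.hessOp_symm (hF : IsSupportFn n F) (hx : x ≠ 0) (v w : Euc n) :
    ⟪hessOp n F x v, w⟫ = ⟪v, hessOp n F x w⟫ := by
  rw [hF.inner_hessOp hx, real_inner_comm, hF.inner_hessOp hx]
  exact (hF.contDiffAt hx).isSymmSndFDerivAt
    (by simp only [minSmoothness_of_isRCLikeNormedField]; norm_cast) v w

/-- The gradient is positively 0-homogeneous, so the Hessian annihilates the radial direction. -/
theorem IsSupportFn.hessOp_self (hF : IsSupportFn n F) (hx : x ≠ 0) :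
    hessOp n F x x = 0 := by
  have hgrad : ∀ c : ℝ, 0 < c → fderiv ℝ F (c • x) = fderiv ℝ F x := by
    intro c hc
    have h1 : (fun y => F (c • y)) = c • F := by
      ext y; simp [hF.homog c hc y]
    have h2 := fderiv_comp_smul (𝕜 := ℝ) (f := F) (x := x) c
    rw [h1, fderiv_const_smul (hF.differentiableAt hx)] at h2
    exact (smul_right_injective _ hc.ne' h2).symm
  have hd : HasDerivAt (fun t : ℝ => fderiv ℝ F (t • x)) (fderiv ℝ (fderiv ℝ F) x x) 1 := by
    have h1 : HasDerivAt (fun t : ℝ => t • x) x 1 := by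
      simpa using (hasDerivAt_id (1 : ℝ)).smul_const x
    have h2 : HasFDerivAt (fderiv ℝ F) (fderiv ℝ (fderiv ℝ F) x) ((1 : ℝ) • x) := by
      rw [one_smul]; exact (hF.differentiableAt_fderiv hx).hasFDerivAt
    exact h2.comp_hasDerivAt (1 : ℝ) h1
  have hc : HasDerivAt (fun t : ℝ => fderiv ℝ F (t • x)) 0 1 := by
    refine (hasDerivAt_const (1 : ℝ) (fderiv ℝ F x)).congr_of_eventuallyEq ?_
    filter_upwards [lt_mem_nhds (zero_lt_one' ℝ)] with t ht using hgrad t ht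
  refine ext_inner_right ℝ fun w => ?_
  rw [hF.inner_hessOp hx, hd.unique hc]
  simp

/-- Second-order necessary condition at a local minimum. -/
theorem IsLocalMin.fderiv_fderiv_nonneg {G : Euc n → ℝ} (hmin : IsLocalMin G x)
    (hG : ∀ᶠ y in 𝓝 x, DifferentiableAt ℝ G y)
    (hG2 : DifferentiableAt ℝ (fderiv ℝ G) x) (v : Euc n) :
    0 ≤ fderiv ℝ (fderiv ℝ G) x v v := by
  have hl : ∀ t : ℝ, HasDerivAt (fun t : ℝ => x + t • v) v t := fun t => by
    simpa using ((hasDerivAt_id t).smul_const v).const_add x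
  have hlim : Tendsto (fun t : ℝ => x + t • v) (𝓝 0) (𝓝 x) := by
    simpa using (hl 0).continuousAt.tendsto
  have hd : deriv (fun t : ℝ => G (x + t • v)) =ᶠ[𝓝 0] fun t => fderiv ℝ G (x + t • v) v := by
    filter_upwards [hlim.eventually hG] with t ht
    exact (ht.hasFDerivAt.comp_hasDerivAt t (hl t)).deriv
  have hdd : deriv (deriv (fun t : ℝ => G (x + t • v))) 0 = fderiv ℝ (fderiv ℝ G) x v v := by
    rw [hd.deriv_eq]
    have h2 : HasFDerivAt (fderiv ℝ G) (fderiv ℝ (fderiv ℝ G) x) (x + (0 : ℝ) • v) := by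
      simpa using hG2.hasFDerivAt
    have h3 : HasDerivAt (fun t : ℝ => fderiv ℝ G (x + t • v)) (fderiv ℝ (fderiv ℝ G) x v) 0 :=
      h2.comp_hasDerivAt (0 : ℝ) (hl 0)
    simpa using (h3.clm_apply (hasDerivAt_const (0 : ℝ) v)).deriv
  have hmin' : IsLocalMin (fun t : ℝ => G (x + t • v)) 0 := by
    have := hlim.eventually hmin
    simpa [IsLocalMin, IsMinFilter] using this
  by_contra! hneg
  rw [← hdd] at hneg
  have hcont : ContinuousAt (fun t : ℝ => G (x + t • v)) 0 := by
    refine ContinuousAt.comp (g := G) ?_ (hl 0).continuousAt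
    simpa using hG.self_of_nhds.continuousAt
  have hmax := isLocalMax_of_deriv_deriv_neg hneg hmin'.deriv_eq_zero hcont
  -- A point that is both a local minimum and a local maximum has locally constant values,
  -- hence zero second derivative.
  have hconst : (fun t : ℝ => G (x + t • v)) =ᶠ[𝓝 0] fun _ => G (x + (0 : ℝ) • v) := by
    filter_upwards [hmin', hmax] with t h1 h2 using le_antisymm h2 h1
  have : deriv (deriv (fun t : ℝ => G (x + t • v))) 0 = 0 := by
    rw [hconst.deriv.deriv_eq]; simp
  exact hneg.ne this

theorem IsSupportFn.radTerm_pos (hF : IsSupportFn n F) (hx : x ∈ USphere n) :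
    0 < radTerm n F x := by
  have := hF.pos x hx
  exact Real.sqrt_pos.2 (by positivity)

/-! ### The operators `c Hess F + x ⊗ x` -/

/-- The operator `c Hess F + x ⊗ x` at `x`. For `c = 1` its determinant is `sphDet n F x`; the
radial term `x ⊗ x` is deliberately not scaled, so that the operators attached to two
functions are compared by comparing only the Hessian terms. -/
def scaledOp (n : ℕ) (c : ℝ) (F : Euc n → ℝ) (x : Euc n) : Euc n →ₗ[ℝ] Euc n :=
  ((c • hessOp n F x + (innerSL ℝ x).smulRight x : Euc n →L[ℝ] Euc n) : Euc n →ₗ[ℝ] Euc n)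

theorem scaledOp_apply (c : ℝ) (v : Euc n) :
    scaledOp n c F x v = c • hessOp n F x v + ⟪x, v⟫ • x := by
  simp [scaledOp]

theorem sphDet_eq_det_scaledOp : sphDet n F x = LinearMap.det (scaledOp n 1 F x) := by
  rw [sphDet, scaledOp, one_smul]

theorem inner_scaledOp (c : ℝ) (v : Euc n) :
    ⟪v, scaledOp n c F x v⟫ = c * ⟪v, hessOp n F x v⟫ + ⟪x, v⟫ ^ 2 := by
  rw [scaledOp_apply, inner_add_right, inner_smul_right, inner_smul_right, real_inner_comm x v]
  ring

theorem IsSupportFn.scaledOp_isSymmetric (hF : IsSupportFn n F) (hx : x ≠ 0) (c : ℝ) :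
    (scaledOp n c F x).IsSymmetric := by
  intro v w
  simp only [scaledOp_apply, inner_add_left, inner_add_right, inner_smul_left, inner_smul_right,
    hF.hessOp_symm hx, conj_trivial]
  rw [real_inner_comm x v]; ring

/-- `Hess F + x ⊗ x` is positive definite on the whole space: the Hessian controls the tangential
directions and `x ⊗ x` the radial one. -/
theorem IsSupportFn.scaledOp_pos (hF : IsSupportFn n F) (hx : x ∈ USphere n) {v : Euc n}
    (hv : v ≠ 0) : 0 < ⟪v, scaledOp n 1 F x v⟫ := by
  have hx1 : ‖x‖ = 1 := by simpa using hx
  have hx0 : x ≠ 0 := by rintro rfl; simp at hx1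
  have hxx : ⟪x, x⟫ = 1 := by rw [real_inner_self_eq_norm_sq, hx1]; norm_num
  -- Split `v` into its radial part and its part `w` tangent to the sphere.
  set w := v - ⟪x, v⟫ • x with hw
  have hxw : ⟪x, w⟫ = 0 := by rw [hw, inner_sub_right, inner_smul_right, hxx]; ring
  have hvw : v = w + ⟪x, v⟫ • x := by rw [hw]; abel
  have hH : ⟪v, hessOp n F x v⟫ = ⟪w, hessOp n F x w⟫ := by
    have e : hessOp n F x v = hessOp n F x w := by
      rw [hw, map_sub, map_smul, hF.hessOp_self hx0, smul_zero, sub_zero]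
    rw [e, ← hF.hessOp_symm hx0, e, hF.hessOp_symm hx0]
  rw [inner_scaledOp, one_mul, hH]
  by_cases hw0 : w = 0
  · have : ⟪x, v⟫ ≠ 0 := by
      intro h0
      rw [hw0, h0, zero_smul, zero_add] at hvw
      exact hv hvw
    rw [hw0]; simp only [inner_zero_left, zero_add]; positivity
  · have := hF.posdef x hx w hw0 hxw
    positivity

/-- Scaling the Hessian by `c` multiplies the determinant on the `(n-1)`-dimensional tangent
space by `c ^ (n - 1)`; the extra factor `c` on the left accounts for the radial direction. -/
theorem IsSupportFn.det_scaledOp (hF : IsSupportFn n F) (hx : x ∈ USphere n) {c : ℝ} :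
    c * LinearMap.det (scaledOp n c F x) = c ^ n * sphDet n F x := by
  have hx1 : ‖x‖ = 1 := by simpa using hx
  have hx0 : x ≠ 0 := by rintro rfl; simp at hx1
  have hxx : ⟪x, x⟫ = 1 := by rw [real_inner_self_eq_norm_sq, hx1]; norm_num
  -- `T` multiplies the radial direction by `c` and fixes the tangent space.
  set T := LinearMap.transvection ((innerSL ℝ x : Euc n →L[ℝ] ℝ) : Euc n →ₗ[ℝ] ℝ)
    ((c - 1) • x) with hT
  have hdet : LinearMap.det T = c := by
    rw [hT, LinearMap.transvection.det]
    simp [hx1]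
  have hcomp : T ∘ₗ scaledOp n c F x = c • scaledOp n 1 F x := by
    refine LinearMap.ext fun v => ?_
    have h0 : ⟪x, hessOp n F x v⟫ = 0 := by
      rw [← hF.hessOp_symm hx0, hF.hessOp_self hx0, inner_zero_left]
    have h1 : ⟪x, scaledOp n c F x v⟫ = ⟪x, v⟫ := by
      rw [scaledOp_apply, inner_add_right, inner_smul_right, inner_smul_right, h0, hxx]; ring
    rw [LinearMap.comp_apply, hT, LinearMap.transvection.apply]
    simp only [ContinuousLinearMap.coe_coe, innerSL_apply_apply, h1, LinearMap.smul_apply]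
    rw [scaledOp_apply, scaledOp_apply]
    module
  have := congrArg LinearMap.det hcomp
  rw [LinearMap.det_comp, hdet, LinearMap.det_smul, ← sphDet_eq_det_scaledOp] at this
  simpa using this

/-! ### Comparison at the maximum of the ratio -/

/-- Comparison of two solutions: touching `h₁` from above by the dilate `c h₂`, where `c` is the
maximum of `h₁ / h₂`, is incompatible with the equation if `c > 1`. -/
theorem orlicz_le {f : Euc n → ℝ} {φ : ℝ → ℝ}
    (hf_pos : ∀ x ∈ USphere n, 0 < f x)
    (hφ_pos : ∀ s ∈ Ioi (0 : ℝ), 0 < φ s)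
    (hφ_mono : StrictMonoOn φ (Ioi 0))
    {h₁ h₂ : Euc n → ℝ}
    (hh₁ : IsSupportFn n h₁) (hh₂ : IsSupportFn n h₂)
    (heq₁ : ∀ x ∈ USphere n,
      φ (1 / h₁ x) * h₁ x * sphDet n h₁ x / radTerm n h₁ x ^ n = f x)
    (heq₂ : ∀ x ∈ USphere n,
      φ (1 / h₂ x) * h₂ x * sphDet n h₂ x / radTerm n h₂ x ^ n = f x) :
    ∀ x ∈ USphere n, h₁ x ≤ h₂ x := by
  have hne : ∀ y ∈ USphere n, y ≠ 0 := by
    rintro y hy rfl; simp at hy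
  by_contra! hcon
  obtain ⟨z, hz, hzlt⟩ := hcon
  have hcont : ContinuousOn (fun y => h₁ y / h₂ y) (USphere n) := fun y hy =>
    ((hh₁.differentiableAt (hne y hy)).continuousAt.div
      (hh₂.differentiableAt (hne y hy)).continuousAt (hh₂.pos y hy).ne').continuousWithinAt
  obtain ⟨x, hx, hmax⟩ := (isCompact_sphere (0 : Euc n) 1).exists_isMaxOn ⟨z, hz⟩ hcont
  have hx0 := hne x hx
  obtain ⟨c, hc⟩ : ∃ c, c = h₁ x / h₂ x := ⟨_, rfl⟩
  have hp1 := hh₁.pos x hx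
  have hp2 := hh₂.pos x hx
  have hc1 : 1 < c := by
    have h1 : h₁ z / h₂ z ≤ c := hc ▸ hmax hz
    have h2 : 1 < h₁ z / h₂ z := (one_lt_div (hh₂.pos z hz)).2 hzlt
    linarith
  have hc0 : 0 < c := by linarith
  have hval : h₁ x = c * h₂ x := by rw [hc]; field_simp
  have hle : ∀ y : Euc n, y ≠ 0 → h₁ y ≤ c * h₂ y := by
    intro y hy
    have hny : 0 < ‖y‖ := norm_pos_iff.2 hy
    have hu : ‖y‖⁻¹ • y ∈ USphere n := by simp [norm_smul, hny.ne']
    have h1 : h₁ (‖y‖⁻¹ • y) / h₂ (‖y‖⁻¹ • y) ≤ c := hc ▸ hmax hu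
    rw [div_le_iff₀ (hh₂.pos _ hu), hh₁.homog _ (inv_pos.2 hny), hh₂.homog _ (inv_pos.2 hny)] at h1
    have := inv_pos.2 hny
    nlinarith
  -- `G` attains its minimum over `ℝⁿ ∖ {0}` at `x`.
  set G : Euc n → ℝ := c • h₂ - h₁ with hGdef
  have hnhds : ∀ᶠ y in 𝓝 x, y ≠ 0 := isOpen_ne.mem_nhds hx0
  have hGmin : IsLocalMin G x := by
    filter_upwards [hnhds] with y hy
    have := hle y hy
    simp only [hGdef, Pi.sub_apply, Pi.smul_apply, smul_eq_mul]
    linarith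
  have hGfd : ∀ y, y ≠ 0 → fderiv ℝ G y = c • fderiv ℝ h₂ y - fderiv ℝ h₁ y := fun y hy => by
    rw [hGdef, fderiv_sub ((hh₂.differentiableAt hy).const_smul c) (hh₁.differentiableAt hy),
      fderiv_const_smul (hh₂.differentiableAt hy)]
  have hGd : ∀ᶠ y in 𝓝 x, DifferentiableAt ℝ G y := by
    filter_upwards [hnhds] with y hy
    exact ((hh₂.differentiableAt hy).const_smul c).sub (hh₁.differentiableAt hy)
  have hGev : fderiv ℝ G =ᶠ[𝓝 x] c • fderiv ℝ h₂ - fderiv ℝ h₁ := by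
    filter_upwards [hnhds] with y hy using hGfd y hy
  have hG2 : HasFDerivAt (fderiv ℝ G)
      (c • fderiv ℝ (fderiv ℝ h₂) x - fderiv ℝ (fderiv ℝ h₁) x) x :=
    (((hh₂.differentiableAt_fderiv hx0).hasFDerivAt.const_smul c).sub
      (hh₁.differentiableAt_fderiv hx0).hasFDerivAt).congr_of_eventuallyEq hGev
  have hfd : fderiv ℝ h₁ x = c • fderiv ℝ h₂ x := by
    have := hGmin.fderiv_eq_zero
    rw [hGfd x hx0, sub_eq_zero] at this
    exact this.symm
  have hhess : ∀ v, ⟪v, hessOp n h₁ x v⟫ ≤ c * ⟪v, hessOp n h₂ x v⟫ := by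
    intro v
    have := hGmin.fderiv_fderiv_nonneg hGd hG2.differentiableAt v
    rw [hG2.fderiv] at this
    rw [← hh₁.hessOp_symm hx0, ← hh₂.hessOp_symm hx0, hh₁.inner_hessOp hx0, hh₂.inner_hessOp hx0]
    simpa using this
  have hgrad : gradient h₁ x = c • gradient h₂ x := by
    simp [gradient, hfd]
  have hrad : radTerm n h₁ x = c * radTerm n h₂ x := by
    have hs : sphGrad n h₁ x = c • sphGrad n h₂ x := by
      rw [sphGrad, sphGrad, hgrad, inner_smul_left, conj_trivial, smul_sub, mul_smul]
    rw [radTerm, radTerm, hs, hval, norm_smul, Real.norm_of_nonneg hc0.le,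
      show (c * ‖sphGrad n h₂ x‖) ^ 2 + (c * h₂ x) ^ 2
        = c ^ 2 * (‖sphGrad n h₂ x‖ ^ 2 + h₂ x ^ 2) by ring,
      Real.sqrt_mul (sq_nonneg c), Real.sqrt_sq hc0.le]
  have hdet : c * sphDet n h₁ x ≤ c ^ n * sphDet n h₂ x := by
    rw [← hh₂.det_scaledOp hx, sphDet_eq_det_scaledOp]
    refine mul_le_mul_of_nonneg_left (linearMap_det_le_det n (hh₁.scaledOp_isSymmetric hx0 1)
      (hh₂.scaledOp_isSymmetric hx0 c) (fun v hv => hh₁.scaledOp_pos hx hv) fun v => ?_) hc0.le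
    rw [inner_scaledOp, inner_scaledOp]
    linarith [hhess v]
  have hφlt : φ (1 / h₁ x) < φ (1 / h₂ x) := by
    refine hφ_mono (by simpa using hp1) (by simpa using hp2) ?_
    refine one_div_lt_one_div_of_lt hp2 ?_
    rw [hval]; nlinarith
  have hφ1 := hφ_pos (1 / h₁ x) (by simpa using hp1)
  have hr1 := pow_pos (hh₁.radTerm_pos hx) n
  have hr2 := pow_pos (hh₂.radTerm_pos hx) n
  have hdpos : 0 < sphDet n h₁ x := by
    have h := hf_pos x hx
    rw [← heq₁ x hx, div_pos_iff_of_pos_right hr1] at h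
    exact (pos_iff_pos_of_mul_pos h).1 (mul_pos hφ1 hp1)
  -- Cancel the common factors; the powers of `c` balance because everything except `φ` has
  -- degree zero in `h`.
  have hE := (heq₁ x hx).trans (heq₂ x hx).symm
  rw [div_eq_div_iff hr1.ne' hr2.ne', hrad, mul_pow] at hE
  have hE' : φ (1 / h₁ x) * (c * sphDet n h₁ x) = φ (1 / h₂ x) * (c ^ n * sphDet n h₂ x) := by
    refine mul_right_cancel₀ (mul_pos hp2 hr2).ne' ?_
    linear_combination hE + φ (1 / h₁ x) * sphDet n h₁ x * radTerm n h₂ x ^ n * (-1) * hval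
  have h1 : φ (1 / h₁ x) * (c * sphDet n h₁ x) < φ (1 / h₂ x) * (c * sphDet n h₁ x) :=
    mul_lt_mul_of_pos_right hφlt (mul_pos hc0 hdpos)
  have h2 : φ (1 / h₂ x) * (c * sphDet n h₁ x) ≤ φ (1 / h₂ x) * (c ^ n * sphDet n h₂ x) :=
    mul_le_mul_of_nonneg_left hdet (hφ1.trans hφlt).le
  linarith

/-- uniqueness of solutions of the Orlicz {M}onge-{A}mp\`ere equation
when `φ` is strictly increasing. -/
theorem orlicz_uniqueness
    (n : ℕ) (hn : 2 ≤ n)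
    (f : Euc n → ℝ) (φ : ℝ → ℝ)
    (hf_smooth : ContDiffOn ℝ (⊤ : ℕ∞) f {(0 : Euc n)}ᶜ)
    (hf_pos : ∀ x ∈ USphere n, 0 < f x)
    (hφ_smooth : ContDiffOn ℝ (⊤ : ℕ∞) φ (Ioi 0))
    (hφ_pos : ∀ s ∈ Ioi (0 : ℝ), 0 < φ s)
    (hφ_mono : StrictMonoOn φ (Ioi 0))
    (h₁ h₂ : Euc n → ℝ)
    (hh₁ : IsSupportFn n h₁) (hh₂ : IsSupportFn n h₂)
    (heq₁ : ∀ x ∈ USphere n,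
      φ (1 / h₁ x) * h₁ x * sphDet n h₁ x / radTerm n h₁ x ^ n = f x)
    (heq₂ : ∀ x ∈ USphere n,
      φ (1 / h₂ x) * h₂ x * sphDet n h₂ x / radTerm n h₂ x ^ n = f x) :
    Set.EqOn h₁ h₂ (USphere n) := by
  exact fun x hx => le_antisymm
    (orlicz_le hf_pos hφ_pos hφ_mono hh₁ hh₂ heq₁ heq₂ x hx)
    (orlicz_le hf_pos hφ_pos hφ_mono hh₂ hh₁ heq₂ heq₁ x hx)
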